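/- Let P ⊂ ℝⁿ be an integral polytope of dimension d. Then there exists a polynomial L_P of degree exactly d such that L_P(t) = #(t·P ∩ ℤⁿ) for all integers t ≥ 1 (Ehrhart's theorem). -/

import Mathlib

open Pointwise

/-- Number of lattice points of a subset of `ℝⁿ`. -/
noncomputable def latticeCount {n : ℕ} (S : Set (Fin n → ℝ)) : ℕ :=
  Set.ncard {x ∈ S | ∀ i, ∃ m : ℤ, x i = m}

/-!
Among all ways of writing a point of `t • P` as a nonnegative combination of the generators `v i`
with coefficient sum `t`, there is a unique lexicographically smallest one. The supports of these
combinations are the faces of a triangulation of `P` by affinely independent subfamilies of `v`, and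
lexicographic minimality depends on the support only. Hence subtracting natural numbers from the
nonzero coefficients so as to bring them into `(0, 1]` turns the minimal combination of a lattice
point of `t • P` into that of a lattice point of some `h • P`. There are finitely many such reduced
combinations `f`, independently of `t`, and the lattice points of `t • P` reducing to `f` correspond
to the ways of distributing `t - h` units over the support of `f`: their number is a binomial
coefficient, polynomial in `t` of degree `#(support f) - 1` with positive leading coefficient. The
degree `d` is attained because `P` has an affinely independent face with `d + 1` vertices.
-/

open Filter Finset Function Module Polynomial Topology

namespace Ehrhart

section Polynomial

theorem degree_sum_eq_of_leadingCoeff_pos {α R : Type*} [Semiring R] [PartialOrder R]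
    [IsStrictOrderedRing R] {s : Finset α} {p : α → R[X]} {d : ℕ}
    (hle : ∀ a ∈ s, (p a).natDegree ≤ d) (hpos : ∀ a ∈ s, 0 < (p a).leadingCoeff)
    (hex : ∃ a ∈ s, (p a).natDegree = d) : (∑ a ∈ s, p a).degree = d := by
  have coeff_pos {a : α} (ha : a ∈ s) (hd : (p a).natDegree = d) : 0 < (p a).coeff d :=
    hd ▸ hpos a ha
  apply degree_eq_of_le_of_coeff_ne_zero
  · exact (degree_sum_le _ _).trans
      (Finset.sup_le fun a ha ↦ natDegree_le_iff_degree_le.1 (hle a ha))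
  · obtain ⟨a, ha, hd⟩ := hex
    rw [finsetSum_coeff]
    refine (sum_pos' (fun b hb ↦ ?_) ⟨a, ha, coeff_pos ha hd⟩).ne'
    rcases (hle b hb).lt_or_eq with hlt | heq
    · exact (coeff_eq_zero_of_natDegree_lt hlt).ge
    · exact (coeff_pos hb heq).le

theorem eval_preHilbertPoly_eq_zero {F : Type*} [Field F] {d k n : ℕ} (hnk : n < k)
    (hkn : k ≤ n + d) : (preHilbertPoly F d k).eval (n : F) = 0 := by
  have shift : (n : F) - k + 1 = ((n + d - k : ℕ) : F) - d + 1 := by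
    rw [Nat.cast_sub hkn]
    push_cast
    ring
  simp only [preHilbertPoly, eval_smul, eval_comp, eval_add, eval_sub, eval_X, eval_C, eval_one]
  rw [shift, ← descPochhammer_eval_eq_ascPochhammer, descPochhammer_eval_eq_descFactorial,
    Nat.descFactorial_eq_zero_iff_lt.2 (by omega), Nat.cast_zero, smul_zero]

variable {ι : Type*} [Fintype ι] {S : Set ι}

theorem ncard_support_subset_sum_eq (hS : S.Nonempty) (k : ℕ) :
    {c : ι → ℕ | support c ⊆ S ∧ ∑ i, c i = k}.ncard =
      (k + (S.ncard - 1)).choose (S.ncard - 1) := by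
  classical
  lift S to Finset ι using S.toFinite
  have hcard : 0 < #S := card_pos.2 (by simpa using hS)
  have hset : {c : ι → ℕ | support c ⊆ S ∧ ∑ i, c i = k} = (piAntidiag S k : Set (ι → ℕ)) := by
    ext c
    simp only [Set.mem_ofPred_eq, mem_coe, mem_piAntidiag, support_subset_iff,
      and_comm (b := ∀ _, _)]
    refine and_congr_right fun hc ↦ ?_
    rw [sum_subset (subset_univ S) fun i _ hi ↦ not_not.1 (mt (hc i) hi)]
  have hpi : #(piAntidiag S k) = #(finsuppAntidiag S k) := by
    rw [finsuppAntidiag, card_map, card_attach]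
  rw [hset, Set.ncard_coe_finset, hpi, card_finsuppAntidiag_nat_eq_choose, Set.ncard_coe_finset,
    show #S + k - 1 = k + (#S - 1) by omega, Nat.choose_symm_add]

theorem eval_preHilbertPoly_eq_ncard (F : Type*) [Field F] [CharZero F] (hS : S.Nonempty)
    {h t : ℕ} (hh : h ≤ S.ncard) (ht : 0 < t) :
    (preHilbertPoly F (S.ncard - 1) h).eval (t : F) =
      {c : ι → ℕ | support c ⊆ S ∧ ∑ i, c i + h = t}.ncard := by
  rcases le_or_gt h t with hle | hlt
  · have hsum (c : ι → ℕ) : ∑ i, c i + h = t ↔ ∑ i, c i = t - h := by omega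
    simp only [hsum]
    rw [preHilbertPoly_eq_choose_sub_add F _ hle, ncard_support_subset_sum_eq hS]
  · have hsum (c : ι → ℕ) : ∑ i, c i + h ≠ t := by omega
    rw [eval_preHilbertPoly_eq_zero hlt (by omega)]
    simp [hsum]

end Polynomial

section Affine

theorem affineSpan_image_notMem_affineSpan_Ioi {k V P ι : Type*} [Ring k] [AddCommGroup V]
    [Module k V] [AddTorsor V P] [Preorder ι] [WellFoundedGT ι] (p : ι → P) :
    affineSpan k (p '' {i | p i ∉ affineSpan k (p '' Set.Ioi i)}) =
      affineSpan k (Set.range p) := by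
  set S := {i | p i ∉ affineSpan k (p '' Set.Ioi i)}
  have hmem (i : ι) : p i ∈ affineSpan k (p '' S) := by
    induction i using WellFoundedGT.induction with
    | ind i ih =>
      by_cases hi : i ∈ S
      · exact mem_affineSpan k (Set.mem_image_of_mem p hi)
      · exact affineSpan_le.2 (Set.image_subset_iff.2 ih) (not_not.1 hi)
  exact le_antisymm (affineSpan_mono k (Set.image_subset_range _ _))
    (affineSpan_le.2 (Set.range_subset_iff.2 hmem))

theorem mem_affineSpan_image_of_sum_smul_eq_zero {k V ι : Type*} [Field k] [AddCommGroup V]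
    [Module k V] [Fintype ι] {v : ι → V} {a : ι → k} (ha : ∑ i, a i = 0)
    (hav : ∑ i, a i • v i = 0) {i : ι} (hi : a i ≠ 0) {s : Set ι}
    (hs : ∀ j ≠ i, a j ≠ 0 → j ∈ s) : v i ∈ affineSpan k (v '' s) := by
  classical
  set w : ι → k := Pi.single i 1 - (a i)⁻¹ • a with hw
  have hw_sum : ∑ j, w j = 1 := by
    simp [hw, ← mul_sum, ha]
  have hw_comb : univ.affineCombination k v w = v i := by
    rw [affineCombination_eq_linear_combination _ _ _ hw_sum]
    simp [hw, sub_smul, mul_smul, ← smul_sum, hav, Pi.single_apply, ite_smul]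
  rw [← hw_comb]
  refine affineCombination_mem_affineSpan_image hw_sum (fun j _ hj ↦ ?_) v
  by_cases hji : j = i
  · simp [hw, hji, hi]
  · have : a j = 0 := not_not.1 (mt (hs j hji) hj)
    simp [hw, hji, this]

section ConvexHull

variable {𝕜 ι E : Type*} [Field 𝕜] [LinearOrder 𝕜] [IsStrictOrderedRing 𝕜] [Fintype ι]
  [AddCommGroup E] [Module 𝕜 E] {v : ι → E}

theorem convexHull_range_eq_image_stdSimplex :
    convexHull 𝕜 (Set.range v) = Fintype.linearCombination 𝕜 v '' stdSimplex 𝕜 ι := by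
  classical
  rw [← convexHull_rangle_single_eq_stdSimplex, LinearMap.image_convexHull, ← Set.range_comp]
  congr with i
  simp

theorem mem_smul_convexHull_range_iff {t : 𝕜} (ht : 0 < t) {x : E} :
    x ∈ t • convexHull 𝕜 (Set.range v) ↔
      ∃ b : ι → 𝕜, (∀ i, 0 ≤ b i) ∧ ∑ i, b i = t ∧ ∑ i, b i • v i = x := by
  simp only [convexHull_range_eq_image_stdSimplex, Set.mem_smul_set, Set.exists_mem_image,
    Fintype.linearCombination_apply]
  constructor
  · rintro ⟨b, ⟨hb, hb_sum⟩, rfl⟩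
    exact ⟨t • b, fun i ↦ mul_nonneg ht.le (hb i), by simp [← mul_sum, hb_sum],
      by simp [smul_sum, mul_smul]⟩
  · rintro ⟨b, hb, hb_sum, rfl⟩
    refine ⟨t⁻¹ • b, ⟨fun i ↦ mul_nonneg (inv_nonneg.2 ht.le) (hb i), ?_⟩, ?_⟩
    · simp [← mul_sum, hb_sum, ht.ne']
    · simp [mul_smul, ← smul_sum, ht.ne']

end ConvexHull

theorem isCompact_nonneg_sum_smul_eq {ι E : Type*} [Fintype ι] [AddCommGroup E] [Module ℝ E]
    (v : ι → E) (t : ℝ) (x : E) :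
    IsCompact {b : ι → ℝ | (∀ i, 0 ≤ b i) ∧ ∑ i, b i = t ∧ ∑ i, b i • v i = x} := by
  refine isCompact_Icc.of_isClosed_subset (s := Set.Icc 0 fun _ ↦ t) ?_ ?_
  · have hfiber : IsClosed {b : ι → ℝ | Fintype.linearCombination ℝ v b = x} := by
      by_cases hx : ∃ b₀, Fintype.linearCombination ℝ v b₀ = x
      · obtain ⟨b₀, rfl⟩ := hx
        simp only [← LinearMap.sub_mem_ker_iff]
        exact (Submodule.closed_of_finiteDimensional _).preimage (by fun_prop : Continuous (· - b₀))
      · simp [not_exists.1 hx]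
    simp only [Fintype.linearCombination_apply] at hfiber
    refine .and ?_ (.and (isClosed_eq (by fun_prop) continuous_const) hfiber)
    simp only [Set.ofPred_forall]
    exact isClosed_iInter fun i ↦ isClosed_le continuous_const (continuous_apply i)
  · rintro b ⟨hb, rfl, -⟩
    exact ⟨hb, fun i ↦ single_le_sum (fun j _ ↦ hb j) (mem_univ i)⟩

theorem exists_pos_forall_add_mul_nonneg {ι : Type*} [Finite ι] {a b : ι → ℝ}
    (hb : ∀ i, 0 ≤ b i) (ha : ∀ i ∉ support b, 0 ≤ a i) :
    ∃ ε : ℝ, 0 < ε ∧ ∀ i, 0 ≤ b i + ε * a i := by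
  have hnear (i : ι) : ∀ᶠ ε in 𝓝[>] (0 : ℝ), 0 ≤ b i + ε * a i := by
    by_cases hi : i ∈ support b
    · have hlim : Tendsto (fun ε ↦ b i + ε * a i) (𝓝 0) (𝓝 (b i)) :=
        Continuous.tendsto' (by fun_prop) _ _ (by simp)
      exact (hlim.mono_left nhdsWithin_le_nhds).eventually_const_le ((hb i).lt_of_ne' hi)
    · filter_upwards [self_mem_nhdsWithin] with ε hε
      exact add_nonneg (hb i) (mul_nonneg (le_of_lt hε) (ha i hi))
  exact (eventually_mem_nhdsWithin.and (eventually_all.2 hnear)).exists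

end Affine

section Lex

variable {ι : Type*} [LinearOrder ι]

theorem exists_forall_toLex_le [Finite ι] {α : ι → Type*} [∀ i, LinearOrder (α i)]
    [∀ i, TopologicalSpace (α i)] [∀ i, OrderClosedTopology (α i)] {K : Set (∀ i, α i)}
    (hK : IsCompact K) (hne : K.Nonempty) : ∃ b ∈ K, ∀ c ∈ K, toLex b ≤ toLex c := by
  cases nonempty_fintype ι
  suffices hmin : ∀ s : Finset ι, ∃ b ∈ K, ∀ c ∈ K, (∀ i ∈ s, b i = c i) ∨
      ∃ i ∈ s, (∀ j ∈ s, j < i → b j = c j) ∧ b i < c i by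
    obtain ⟨b, hb, hbmin⟩ := hmin univ
    refine ⟨b, hb, fun c hc ↦ ?_⟩
    rcases hbmin c hc with heq | ⟨i, -, heq, hlt⟩
    · exact (congrArg toLex (funext fun i ↦ heq i (mem_univ i))).le
    · exact le_of_lt ⟨i, fun j ↦ heq j (mem_univ j), hlt⟩
  intro s
  induction s using Finset.induction_on_max with
  | empty => exact hne.imp fun b hb ↦ ⟨hb, fun c _ ↦ Or.inl (by simp)⟩
  | insert m s hm ih =>
    obtain ⟨b₀, hb₀, hb₀min⟩ := ih
    have hclosed : IsClosed {c : ∀ i, α i | ∀ i ∈ s, b₀ i = c i} := by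
      simp only [Set.ofPred_forall]
      exact isClosed_biInter fun i _ ↦ isClosed_eq continuous_const (continuous_apply i)
    obtain ⟨b, ⟨hb, hbb₀⟩, hbmin⟩ := (hK.inter_right hclosed).exists_isMinOn
      ⟨b₀, hb₀, fun _ _ ↦ rfl⟩ (continuous_apply m).continuousOn
    refine ⟨b, hb, fun c hc ↦ ?_⟩
    rcases hb₀min c hc with heq | ⟨i, hi, heq, hlt⟩
    · have hbc : ∀ i ∈ s, b i = c i := fun i hi ↦ (hbb₀ i hi).symm.trans (heq i hi)
      rcases (show b m ≤ c m from hbmin ⟨hc, heq⟩).eq_or_lt with hm_eq | hm_lt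
      · exact Or.inl (forall_mem_insert _ _ _ |>.2 ⟨hm_eq, hbc⟩)
      · refine Or.inr ⟨m, mem_insert_self _ _, fun j hj hjm ↦ ?_, hm_lt⟩
        exact hbc j (mem_of_mem_insert_of_ne hj hjm.ne)
    · refine Or.inr ⟨i, mem_insert_of_mem hi, fun j hj hji ↦ ?_, hbb₀ i hi ▸ hlt⟩
      have hjs : j ∈ s := mem_of_mem_insert_of_ne hj (hji.trans (hm i hi)).ne
      exact (hbb₀ j hjs).symm.trans (heq j hjs hji)

theorem toLex_smul_nonneg_iff {𝕜 : Type*} [Field 𝕜] [LinearOrder 𝕜] [IsStrictOrderedRing 𝕜]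
    [WellFoundedLT ι] {ε : 𝕜} (hε : 0 < ε) {a : ι → 𝕜} :
    0 ≤ toLex (ε • a) ↔ 0 ≤ toLex a := by
  rw [← not_lt, ← not_lt, not_iff_not]
  change (∃ i, (∀ j, j < i → ε * a j = 0) ∧ ε * a i < 0) ↔
    ∃ i, (∀ j, j < i → a j = 0) ∧ a i < 0
  simp [hε.ne', mul_neg_iff, hε, hε.not_gt]

end Lex

section LexFace

variable {ι E : Type*} [Fintype ι] [LinearOrder ι] [AddCommGroup E] [Module ℝ E] {v : ι → E}
  {S T : Set ι} {b c : ι → ℝ}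

/-- `S` is a face of the triangulation of the point configuration `v` induced by the order of the
indices: no affine relation among the points that is nonnegative outside `S` is lexicographically
negative. Equivalently, a nonnegative combination supported on `S` is lexicographically minimal
among those representing the same point with the same coefficient sum. -/
def IsLexFace (v : ι → E) (S : Set ι) : Prop :=
  ∀ a : ι → ℝ, ∑ i, a i = 0 → ∑ i, a i • v i = 0 → (∀ i ∉ S, 0 ≤ a i) → 0 ≤ toLex a

theorem IsLexFace.mono (hS : IsLexFace v S) (hTS : T ⊆ S) : IsLexFace v T :=
  fun a ha hav hT ↦ hS a ha hav fun i hi ↦ hT i (mt (@hTS i) hi)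

theorem IsLexFace.toLex_le (hb : IsLexFace v (support b)) (hc : ∀ i, 0 ≤ c i)
    (hsum : ∑ i, b i = ∑ i, c i) (hcomb : ∑ i, b i • v i = ∑ i, c i • v i) :
    toLex b ≤ toLex c := by
  rw [← sub_nonneg, ← toLex_sub]
  refine hb (c - b) (by simp [hsum]) (by simp [sub_smul, hcomb]) fun i hi ↦ ?_
  simpa [notMem_support.1 hi] using hc i

theorem IsLexFace.coeff_unique (hb : IsLexFace v (support b)) (hc : IsLexFace v (support c))
    (hb₀ : ∀ i, 0 ≤ b i) (hc₀ : ∀ i, 0 ≤ c i) (hsum : ∑ i, b i = ∑ i, c i)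
    (hcomb : ∑ i, b i • v i = ∑ i, c i • v i) : b = c :=
  toLex.injective <|
    (hb.toLex_le hc₀ hsum hcomb).antisymm (hc.toLex_le hb₀ hsum.symm hcomb.symm)

theorem exists_isLexFace_support (v : ι → E) (hb : ∀ i, 0 ≤ b i) :
    ∃ c : ι → ℝ, IsLexFace v (support c) ∧ (∀ i, 0 ≤ c i) ∧ ∑ i, c i = ∑ i, b i ∧
      ∑ i, c i • v i = ∑ i, b i • v i := by
  obtain ⟨c, ⟨hc, hc_sum, hc_comb⟩, hmin⟩ :=
    exists_forall_toLex_le (isCompact_nonneg_sum_smul_eq v (∑ i, b i) (∑ i, b i • v i))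
      ⟨b, hb, rfl, rfl⟩
  refine ⟨c, fun a ha hav ha₀ ↦ ?_, hc, hc_sum, hc_comb⟩
  obtain ⟨ε, hε, hcε⟩ := exists_pos_forall_add_mul_nonneg hc ha₀
  have hle : toLex c ≤ toLex (c + ε • a) := hmin _ ⟨hcε,
    by simp [sum_add_distrib, ← mul_sum, ha, hc_sum],
    by simp [add_smul, sum_add_distrib, mul_smul, ← smul_sum, hav, hc_comb]⟩
  rwa [toLex_add, le_add_iff_nonneg_right, toLex_smul_nonneg_iff hε] at hle

theorem IsLexFace.eq_zero_of_support_subset (hS : IsLexFace v S) {a : ι → ℝ} (ha : ∑ i, a i = 0)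
    (hav : ∑ i, a i • v i = 0) (haS : support a ⊆ S) : a = 0 := by
  have ha₀ : ∀ i ∉ S, a i = 0 := fun i hi ↦ notMem_support.1 (mt (@haS i) hi)
  have hpos : 0 ≤ toLex a := hS a ha hav fun i hi ↦ (ha₀ i hi).ge
  have hneg : 0 ≤ toLex (-a) :=
    hS (-a) (by simp [ha]) (by simp [hav]) fun i hi ↦ by simp [ha₀ i hi]
  exact toLex.injective ((neg_nonneg.1 hneg).antisymm hpos)

theorem IsLexFace.affineIndependent (hS : IsLexFace v S) :
    AffineIndependent ℝ fun i : S ↦ v i := by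
  have := Fintype.ofFinite S
  rw [affineIndependent_iff_of_fintype]
  intro w hw hwv i
  rw [weightedVSub_eq_linear_combination _ hw] at hwv
  set a : ι → ℝ := extend Subtype.val w fun _ ↦ 0
  have ha_coe (i : S) : a i = w i := Subtype.val_injective.extend_apply w _ i
  have ha_off : ∀ i ∉ S, a i = 0 := fun i hi ↦ extend_apply' w _ i (by simpa using hi)
  have ha : a = 0 := by
    refine hS.eq_zero_of_support_subset ?_ ?_ (support_subset_iff'.2 ha_off)
    · rw [← hw]
      exact (Fintype.sum_of_injective _ Subtype.val_injective _ _
        (fun i hi ↦ ha_off i (by simpa using hi)) fun i ↦ (ha_coe i).symm).symm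
    · rw [← hwv]
      exact (Fintype.sum_of_injective _ Subtype.val_injective _ _
        (fun i hi ↦ by simp [ha_off i (by simpa using hi)]) fun i ↦ by rw [ha_coe i]).symm
  rw [← ha_coe i, ha, Pi.zero_apply]

theorem IsLexFace.ncard_le (hS : IsLexFace v S) :
    S.ncard ≤ finrank ℝ (vectorSpan ℝ (Set.range v)) + 1 := by
  have := Fintype.ofFinite S
  calc S.ncard = Fintype.card S := (Set.fintypeCard_eq_ncard S).symm
    _ ≤ finrank ℝ (vectorSpan ℝ (Set.range fun i : S ↦ v i)) + 1 :=
      hS.affineIndependent.card_le_finrank_succ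
    _ ≤ finrank ℝ (vectorSpan ℝ (Set.range v)) + 1 := by
      gcongr
      exact Submodule.finrank_mono
        (vectorSpan_mono ℝ (Set.range_comp_subset_range Subtype.val v))

theorem isLexFace_notMem_affineSpan_Ioi (v : ι → E) :
    IsLexFace v {i | v i ∉ affineSpan ℝ (v '' Set.Ioi i)} := by
  intro a ha hav ha₀
  by_contra! hneg
  obtain ⟨i, hlt, hi⟩ : ∃ i, (∀ j, j < i → a j = 0) ∧ a i < 0 := hneg
  refine (ha₀ i (not_not.2 ?_)).not_gt hi
  refine mem_affineSpan_image_of_sum_smul_eq_zero ha hav hi.ne fun j hji hj ↦ ?_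
  exact lt_of_le_of_ne (not_lt.1 (mt (hlt j) hj)) hji.symm

theorem exists_isLexFace_ncard_eq [Nonempty ι] (v : ι → E) :
    ∃ S : Set ι, IsLexFace v S ∧ S.ncard = finrank ℝ (vectorSpan ℝ (Set.range v)) + 1 := by
  set S := {i | v i ∉ affineSpan ℝ (v '' Set.Ioi i)}
  have hS : IsLexFace v S := isLexFace_notMem_affineSpan_Ioi v
  have hspan : affineSpan ℝ (v '' S) = affineSpan ℝ (Set.range v) :=
    affineSpan_image_notMem_affineSpan_Ioi v
  have := Fintype.ofFinite S
  have : Nonempty S := by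
    rw [Set.nonempty_coe_sort, ← Set.image_nonempty (f := v), ← affineSpan_nonempty ℝ, hspan,
      affineSpan_nonempty]
    exact Set.range_nonempty v
  refine ⟨S, hS, ?_⟩
  rw [← direction_affineSpan, ← hspan, direction_affineSpan, Set.image_eq_range,
    hS.affineIndependent.finrank_vectorSpan_add_one, Set.fintypeCard_eq_ncard]

end LexFace

section Floor

variable {R : Type*} [Ring R] [LinearOrder R] [IsStrictOrderedRing R] [FloorSemiring R] {x : R}

theorem sub_natCast_ceil_sub_one_mem_Ioc (hx : 0 < x) :
    x - ((⌈x⌉₊ - 1 : ℕ) : R) ∈ Set.Ioc 0 1 := by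
  obtain ⟨n, hn⟩ := Nat.exists_eq_add_one.2 (Nat.ceil_pos.2 hx)
  have hlt : (n : R) < x := Nat.lt_ceil.1 (by omega)
  have hle : x ≤ n + 1 := by simpa [hn] using Nat.le_ceil x
  rw [hn, Nat.add_sub_cancel, Set.mem_Ioc, sub_pos, sub_le_iff_le_add']
  exact ⟨hlt, hle⟩

theorem ceil_add_natCast_sub_one (hx : x ∈ Set.Ioc 0 1) (n : ℕ) : ⌈x + n⌉₊ - 1 = n := by
  have hceil : ⌈x⌉₊ = 1 := (Nat.ceil_eq_iff one_ne_zero).2 (by simpa using hx)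
  rw [Nat.ceil_add_natCast hx.1.le, hceil, Nat.add_sub_cancel_left]

end Floor

section BoxPart

variable {ι : Type*} {b f : ι → ℝ} {i : ι}

/-- The coefficients obtained from nonnegative coefficients `b` by subtracting natural numbers so
that the nonzero ones land in `(0, 1]`. Zero coefficients stay zero thanks to the truncated
subtraction. -/
noncomputable def boxPart (b : ι → ℝ) (i : ι) : ℝ :=
  b i - ((⌈b i⌉₊ - 1 : ℕ) : ℝ)

theorem boxPart_mem_Ioc (hi : 0 < b i) : boxPart b i ∈ Set.Ioc 0 1 :=
  sub_natCast_ceil_sub_one_mem_Ioc hi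

theorem boxPart_eq_zero (hi : b i = 0) : boxPart b i = 0 := by
  simp [boxPart, hi]

theorem boxPart_mem_Icc (hb : ∀ i, 0 ≤ b i) (i : ι) : boxPart b i ∈ Set.Icc 0 1 := by
  rcases (hb i).eq_or_lt' with hi | hi
  · simp [boxPart_eq_zero hi]
  · exact Set.Ioc_subset_Icc_self (boxPart_mem_Ioc hi)

theorem support_boxPart (hb : ∀ i, 0 ≤ b i) : support (boxPart b) = support b := by
  ext i
  rcases (hb i).eq_or_lt' with hi | hi
  · simp [boxPart_eq_zero hi, hi]
  · simp [(boxPart_mem_Ioc hi).1.ne', hi.ne']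

theorem support_ceil_sub_one_subset : (support fun i ↦ ⌈b i⌉₊ - 1) ⊆ support b :=
  support_subset_iff'.2 fun i hi ↦ by simp [notMem_support.1 hi]

theorem boxPart_add_natCast (hf : ∀ i, f i ∈ Set.Icc 0 1) {c : ι → ℕ}
    (hc : support c ⊆ support f) : boxPart (fun i ↦ f i + c i) = f := by
  funext i
  rcases (hf i).1.eq_or_lt' with hi | hi
  · have hci : c i = 0 := support_subset_iff'.1 hc i (by simpa using hi)
    exact (boxPart_eq_zero (by simp [hi, hci])).trans hi.symm
  · rw [boxPart, ceil_add_natCast_sub_one ⟨hi, (hf i).2⟩, add_sub_cancel_right]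

end BoxPart

section CanonicalCoeff

variable {ι E : Type*} [Fintype ι] [LinearOrder ι] [AddCommGroup E] [Module ℝ E] {v : ι → E}
  {Λ : AddSubgroup E} {t : ℝ} {b : ι → ℝ}

/-- `b` is the lexicographically smallest family of nonnegative coefficients with sum `t`
representing some point of `Λ` as a combination of the generators `v`. -/
structure IsCanonicalCoeff (v : ι → E) (Λ : AddSubgroup E) (t : ℝ) (b : ι → ℝ) : Prop where
  nonneg : ∀ i, 0 ≤ b i
  sum_eq : ∑ i, b i = t
  mem : ∑ i, b i • v i ∈ Λ
  isLexFace : IsLexFace v (support b)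

theorem injOn_isCanonicalCoeff (v : ι → E) (Λ : AddSubgroup E) (t : ℝ) :
    Set.InjOn (fun b ↦ ∑ i, b i • v i) {b | IsCanonicalCoeff v Λ t b} :=
  fun _ hb _ hc hbc ↦ hb.isLexFace.coeff_unique hc.isLexFace hb.nonneg hc.nonneg
    (hb.sum_eq.trans hc.sum_eq.symm) hbc

theorem bijOn_isCanonicalCoeff (v : ι → E) (Λ : AddSubgroup E) (ht : 0 < t) :
    Set.BijOn (fun b ↦ ∑ i, b i • v i) {b | IsCanonicalCoeff v Λ t b}
      (t • convexHull ℝ (Set.range v) ∩ Λ) := by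
  refine ⟨fun b hb ↦ ⟨?_, hb.mem⟩, injOn_isCanonicalCoeff v Λ t, ?_⟩
  · exact (mem_smul_convexHull_range_iff ht).2 ⟨b, hb.nonneg, hb.sum_eq, rfl⟩
  · rintro x ⟨hx, hxΛ⟩
    obtain ⟨b, hb, rfl, rfl⟩ := (mem_smul_convexHull_range_iff ht).1 hx
    obtain ⟨c, hc_face, hc, hc_sum, hc_comb⟩ := exists_isLexFace_support v hb
    exact ⟨c, ⟨hc, hc_sum, hc_comb ▸ hxΛ, hc_face⟩, hc_comb⟩

theorem IsCanonicalCoeff.add_intCast (hb : IsCanonicalCoeff v Λ t b) (hv : ∀ i, v i ∈ Λ)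
    {c : ι → ℤ} (hbc : ∀ i, 0 ≤ b i + c i) (hsupp : support c ⊆ support b) :
    IsCanonicalCoeff v Λ (t + ∑ i, (c i : ℝ)) fun i ↦ b i + c i where
  nonneg := hbc
  sum_eq := by rw [sum_add_distrib, hb.sum_eq]
  mem := by
    simp only [add_smul, sum_add_distrib, Int.cast_smul_eq_zsmul]
    exact Λ.add_mem hb.mem (Λ.sum_mem fun i _ ↦ Λ.zsmul_mem (hv i) (c i))
  isLexFace := hb.isLexFace.mono <| support_subset_iff'.2 fun i hi ↦ by
    simp [notMem_support.1 hi, support_subset_iff'.1 hsupp i hi]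

theorem finite_setOf_isCanonicalCoeff [TopologicalSpace E] [IsTopologicalAddGroup E]
    [ContinuousSMul ℝ E] [T2Space E] [DiscreteTopology Λ] (v : ι → E) (t : ℝ) :
    {b | IsCanonicalCoeff v Λ t b}.Finite := by
  set K : Set E := (fun b : ι → ℝ ↦ ∑ i, b i • v i) '' Set.Icc 0 fun _ ↦ t
  have hK : IsCompact K := isCompact_Icc.image (by fun_prop)
  have hfin : (K ∩ Λ).Finite := by
    refine (hK.inter_right AddSubgroup.isClosed_of_discrete).finite ?_
    exact (isDiscrete_iff_discreteTopology.2 ‹DiscreteTopology Λ›).mono Set.inter_subset_right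
  have hmaps : Set.MapsTo (fun b ↦ ∑ i, b i • v i) {b | IsCanonicalCoeff v Λ t b} (K ∩ Λ) := by
    refine fun b hb ↦ ⟨⟨b, ⟨hb.nonneg, fun i ↦ ?_⟩, rfl⟩, hb.mem⟩
    exact hb.sum_eq ▸ single_le_sum (fun j _ ↦ hb.nonneg j) (mem_univ i)
  exact .of_injOn hmaps (injOn_isCanonicalCoeff v Λ t) hfin

end CanonicalCoeff

section BoxCoeffs

theorem sum_indicator_one {ι R : Type*} [Fintype ι] [NonAssocSemiring R] (S : Set ι) :
    ∑ i, S.indicator (1 : ι → R) i = S.ncard := by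
  classical
  simp [Set.indicator_apply, Set.ncard_eq_toFinset_card']

variable {ι E : Type*} [Fintype ι] [LinearOrder ι] [AddCommGroup E] [Module ℝ E] {v : ι → E}
  {Λ : AddSubgroup E} {b f : ι → ℝ}

/-- The canonical coefficients, of any positive integral sum, all of whose nonzero entries lie in
`(0, 1]`. They parametrize the classes of lattice points that are counted by one binomial
coefficient each. -/
def boxCoeffs (v : ι → E) (Λ : AddSubgroup E) : Set (ι → ℝ) :=
  {f | f ≠ 0 ∧ (∀ i, f i ≤ 1) ∧ ∃ h : ℕ, IsCanonicalCoeff v Λ h f}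

theorem finite_boxCoeffs [TopologicalSpace E] [IsTopologicalAddGroup E]
    [ContinuousSMul ℝ E] [T2Space E] [DiscreteTopology Λ] (v : ι → E) :
    (boxCoeffs v Λ).Finite := by
  refine ((Set.finite_Iic (Fintype.card ι)).biUnion fun h _ ↦
    finite_setOf_isCanonicalCoeff (Λ := Λ) v (h : ℝ)).subset ?_
  rintro f ⟨-, hf_le, h, hf⟩
  have hcard : (h : ℝ) ≤ Fintype.card ι := by
    simpa [hf.sum_eq] using sum_le_card_nsmul univ f 1 fun i _ ↦ hf_le i
  exact Set.mem_biUnion (by exact_mod_cast hcard : h ∈ Set.Iic (Fintype.card ι)) hf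

theorem IsLexFace.indicator_mem_boxCoeffs (hv : ∀ i, v i ∈ Λ) {S : Set ι} (hS : IsLexFace v S)
    (hne : S.Nonempty) : S.indicator 1 ∈ boxCoeffs v Λ := by
  refine ⟨by simpa using hne.ne_empty, fun i ↦ Set.indicator_le_self' (by simp) i, S.ncard,
    fun i ↦ Set.indicator_nonneg (by simp) i, sum_indicator_one S, ?_, by simpa using hS⟩
  refine Λ.sum_mem fun i _ ↦ ?_
  by_cases hi : i ∈ S
  · simpa [hi] using hv i
  · simp [hi]

theorem IsCanonicalCoeff.boxPart_mem_boxCoeffs (hv : ∀ i, v i ∈ Λ) {t : ℕ} (ht : 0 < t)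
    (hb : IsCanonicalCoeff v Λ t b) : boxPart b ∈ boxCoeffs v Λ := by
  set c : ι → ℕ := fun i ↦ ⌈b i⌉₊ - 1 with hc
  have hbox : boxPart b = fun i ↦ b i + ((-(c i : ℤ) : ℤ) : ℝ) := by
    funext i
    simp [boxPart, hc, sub_eq_add_neg]
  have hcanon : IsCanonicalCoeff v Λ (t + ∑ i, ((-(c i : ℤ) : ℤ) : ℝ)) (boxPart b) := by
    rw [hbox]
    refine hb.add_intCast hv (fun i ↦ ?_) ?_
    · exact congrFun hbox i ▸ (boxPart_mem_Icc hb.nonneg i).1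
    · exact fun i hi ↦ support_ceil_sub_one_subset (by simpa using hi)
  have hc_le : ∑ i, c i ≤ t := by
    have hsum : 0 ≤ t + ∑ i, ((-(c i : ℤ) : ℤ) : ℝ) :=
      hcanon.sum_eq ▸ sum_nonneg fun i _ ↦ hcanon.nonneg i
    simp only [Int.cast_neg, sum_neg_distrib, ← sub_eq_add_neg, sub_nonneg] at hsum
    exact_mod_cast hsum
  refine ⟨?_, fun i ↦ (boxPart_mem_Icc hb.nonneg i).2, t - ∑ i, c i, ?_⟩
  · rw [← support_nonempty_iff, support_boxPart hb.nonneg, support_nonempty_iff]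
    rintro rfl
    exact (Nat.cast_ne_zero.2 ht.ne') (hb.sum_eq.symm.trans (by simp))
  · convert hcanon using 1
    simp [Nat.cast_sub hc_le, sub_eq_add_neg]

theorem setOf_isCanonicalCoeff_boxPart_eq (hv : ∀ i, v i ∈ Λ) (hf_le : ∀ i, f i ≤ 1) {h t : ℕ}
    (hf : IsCanonicalCoeff v Λ h f) :
    {b | IsCanonicalCoeff v Λ t b ∧ boxPart b = f} =
      (fun c i ↦ f i + (c i : ℝ)) '' {c : ι → ℕ | support c ⊆ support f ∧ ∑ i, c i + h = t} := by
  ext b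
  constructor
  · rintro ⟨hb, rfl⟩
    refine ⟨fun i ↦ ⌈b i⌉₊ - 1, ⟨?_, ?_⟩, funext fun i ↦ sub_add_cancel _ _⟩
    · exact (support_boxPart hb.nonneg).symm ▸ support_ceil_sub_one_subset
    · have hsum := hf.sum_eq
      simp only [boxPart, sum_sub_distrib, hb.sum_eq, sub_eq_iff_eq_add'] at hsum
      exact_mod_cast hsum.symm
  · rintro ⟨c, ⟨hc, rfl⟩, rfl⟩
    refine ⟨?_, boxPart_add_natCast (fun i ↦ ⟨hf.nonneg i, hf_le i⟩) hc⟩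
    have hcanon := hf.add_intCast hv (c := fun i ↦ (c i : ℤ))
      (fun i ↦ by simpa using add_nonneg (hf.nonneg i) (c i).cast_nonneg) (by simpa using hc)
    simpa [add_comm] using hcanon

end BoxCoeffs

section EhrhartPoly

/-- The polynomial counting the lattice points of `t • P` whose canonical coefficients reduce to
`f` under `boxPart`. The coefficient sum of an `f ∈ boxCoeffs v Λ` is a natural number, which the
floor turns from a real number into an element of `ℕ`. -/
noncomputable def boxPoly {ι : Type*} [Fintype ι] (f : ι → ℝ) : ℚ[X] :=
  preHilbertPoly ℚ ((support f).ncard - 1) ⌊∑ i, f i⌋₊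

theorem natDegree_boxPoly {ι : Type*} [Fintype ι] (f : ι → ℝ) :
    (boxPoly f).natDegree = (support f).ncard - 1 :=
  natDegree_preHilbertPoly ..

theorem leadingCoeff_boxPoly_pos {ι : Type*} [Fintype ι] (f : ι → ℝ) :
    0 < (boxPoly f).leadingCoeff := by
  rw [boxPoly, leadingCoeff_preHilbertPoly]
  positivity

variable {ι E : Type*} [Fintype ι] [LinearOrder ι] [AddCommGroup E] [Module ℝ E] {v : ι → E}
  {Λ : AddSubgroup E} {f : ι → ℝ}

theorem eval_boxPoly (hv : ∀ i, v i ∈ Λ) (hf : f ∈ boxCoeffs v Λ) {t : ℕ} (ht : 0 < t) :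
    (boxPoly f).eval (t : ℚ) = {b | IsCanonicalCoeff v Λ t b ∧ boxPart b = f}.ncard := by
  obtain ⟨hf_ne, hf_le, h, hf⟩ := hf
  have hinj : Injective fun (c : ι → ℕ) i ↦ f i + (c i : ℝ) := fun c c' hcc' ↦
    funext fun i ↦ Nat.cast_injective (add_left_cancel (congrFun hcc' i))
  have hh : (h : ℝ) ≤ (support f).ncard := by
    rw [← hf.sum_eq, ← sum_indicator_one]
    exact sum_le_sum fun i _ ↦ Set.le_indicator_apply (fun _ ↦ hf_le i) fun hi ↦
      (notMem_support.1 hi).le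
  rw [setOf_isCanonicalCoeff_boxPart_eq hv hf_le hf, Set.ncard_image_of_injective _ hinj, boxPoly,
    hf.sum_eq, Nat.floor_natCast,
    eval_preHilbertPoly_eq_ncard ℚ (support_nonempty_iff.2 hf_ne) (by exact_mod_cast hh) ht]

/-- The Ehrhart polynomial of the polytope `convexHull ℝ (Set.range v)` with respect to the lattice
`Λ`. -/
noncomputable def ehrhartPoly (v : ι → E) (Λ : AddSubgroup E) : ℚ[X] :=
  ∑ᶠ f ∈ boxCoeffs v Λ, boxPoly f

variable [TopologicalSpace E] [IsTopologicalAddGroup E] [ContinuousSMul ℝ E] [T2Space E]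
  [DiscreteTopology Λ]

theorem eval_ehrhartPoly (hv : ∀ i, v i ∈ Λ) {t : ℕ} (ht : 0 < t) :
    (ehrhartPoly v Λ).eval (t : ℚ) = ((t : ℝ) • convexHull ℝ (Set.range v) ∩ Λ).ncard := by
  classical
  have hbox : (boxCoeffs v Λ).Finite := finite_boxCoeffs v
  have hcanon := finite_setOf_isCanonicalCoeff (Λ := Λ) v t
  have hmaps : ∀ b ∈ hcanon.toFinset, boxPart b ∈ hbox.toFinset := fun b hb ↦
    hbox.mem_toFinset.2 ((hcanon.mem_toFinset.1 hb).boxPart_mem_boxCoeffs hv ht)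
  rw [ehrhartPoly, finsum_mem_eq_finite_toFinset_sum _ hbox, eval_finsetSum,
    ← (bijOn_isCanonicalCoeff v Λ (Nat.cast_pos.2 ht)).ncard_eq,
    Set.ncard_eq_toFinset_card _ hcanon, card_eq_sum_card_fiberwise hmaps, Nat.cast_sum]
  refine sum_congr rfl fun f hf ↦ ?_
  rw [eval_boxPoly hv (hbox.mem_toFinset.1 hf) ht, ← Set.ncard_coe_finset]
  simp

theorem degree_ehrhartPoly [Nonempty ι] (hv : ∀ i, v i ∈ Λ) :
    (ehrhartPoly v Λ).degree = finrank ℝ (vectorSpan ℝ (Set.range v)) := by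
  have hbox : (boxCoeffs v Λ).Finite := finite_boxCoeffs v
  rw [ehrhartPoly, finsum_mem_eq_finite_toFinset_sum _ hbox]
  refine degree_sum_eq_of_leadingCoeff_pos (fun f hf ↦ ?_)
    (fun f _ ↦ leadingCoeff_boxPoly_pos f) ?_
  · obtain ⟨-, -, h, hf⟩ := hbox.mem_toFinset.1 hf
    rw [natDegree_boxPoly]
    exact Nat.sub_le_of_le_add hf.isLexFace.ncard_le
  · obtain ⟨S, hS, hcard⟩ := exists_isLexFace_ncard_eq v
    have hne : S.Nonempty := Set.nonempty_of_ncard_ne_zero (by omega)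
    refine ⟨S.indicator 1, hbox.mem_toFinset.2 (hS.indicator_mem_boxCoeffs hv hne), ?_⟩
    rw [natDegree_boxPoly, Set.support_indicator, support_one, Set.inter_univ, hcard,
      Nat.add_sub_cancel]

end EhrhartPoly

end Ehrhart

theorem stmt11_general {E : Type*} [AddCommGroup E] [Module ℝ E] [TopologicalSpace E]
    [IsTopologicalAddGroup E] [ContinuousSMul ℝ E] [T2Space E] (Λ : AddSubgroup E)
    [DiscreteTopology Λ] {V : Set E} (hfin : V.Finite) (hne : V.Nonempty) (hV : V ⊆ Λ) :
    ∃ L : ℚ[X], L.degree = finrank ℝ (vectorSpan ℝ V) ∧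
      ∀ t : ℕ, 0 < t → L.eval (t : ℚ) = ((t : ℝ) • convexHull ℝ V ∩ Λ).ncard := by
  obtain ⟨m, v, -, rfl⟩ := hfin.fin_param
  have := Set.range_nonempty_iff_nonempty.1 hne
  have hv (i : Fin m) : v i ∈ Λ := hV (Set.mem_range_self i)
  exact ⟨Ehrhart.ehrhartPoly v Λ, Ehrhart.degree_ehrhartPoly hv,
    fun t ↦ Ehrhart.eval_ehrhartPoly hv⟩

theorem latticeCount_eq_ncard_inter {n : ℕ} (S : Set (Fin n → ℝ)) :
    latticeCount S =
      (S ∩ (Submodule.span ℤ (Set.range (Pi.basisFun ℝ (Fin n)))).toAddSubgroup).ncard := by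
  refine congrArg Set.ncard (Set.ext fun x ↦ and_congr_right fun _ ↦ ?_)
  simp [Basis.mem_span_iff_repr_mem, eq_comm]

theorem stmt11 (n d : ℕ) (V : Finset (Fin n → ℤ)) (hV : V.Nonempty)
    (P : Set (Fin n → ℝ))
    (hP : P = convexHull ℝ ((fun (v : Fin n → ℤ) (i : Fin n) => (v i : ℝ)) '' V))
    (hd : Module.finrank ℝ (affineSpan ℝ P).direction = d) :
    ∃ L : Polynomial ℚ, L.degree = d ∧
      ∀ t : ℕ, 0 < t → L.eval (t : ℚ) = latticeCount ((t : ℝ) • P) := by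
  subst hP hd
  rw [affineSpan_convexHull, direction_affineSpan]
  simp only [latticeCount_eq_ncard_inter]
  refine stmt11_general _ (V.finite_toSet.image _) (by simpa using hV) ?_
  rintro _ ⟨v, -, rfl⟩
  simp [Basis.mem_span_iff_repr_mem]
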